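/- arXiv:2408.02506 — 4 statements merged into one kernel-verified Lean document; each statement's English description precedes it below -/
import Mathlib

section
/- Weak duality for the SDP of the bipartite conditional min-entropy: let K, indexed by A₀ × B₀ × B₁, be positive semidefinite. Suppose (m, X) is primal feasible: X indexed by B₀ × B₁ satisfies Tr_{B₁} X = m • I_{B₀} and K ≤ I_{A₀} ⊗ X. Suppose (M, N) is dual feasible: M indexed by A₀ × B₀ × B₁ is positive semidefinite, N indexed by B₀ is Hermitian with trace 1, and Tr_{A₀} M ≤ N ⊗ I_{B₁}. Then Re (Matrix.trace (M * K)) ≤ m. -/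
open Matrix
open scoped ComplexOrder

noncomputable section

/-- Loewner order on complex matrices: `M ≤ N` iff `N - M` is positive semidefinite. -/
def LoewnerLE {n : Type*} [Fintype n] (M N : Matrix n n ℂ) : Prop := (N - M).PosSemidef

/-- `π_S ⊗ X`, the maximally mixed state on `S` tensored with `X`. -/
def piFst {S T : Type*} [Fintype S] [DecidableEq S] (X : Matrix T T ℂ) :
    Matrix (S × T) (S × T) ℂ :=
  fun x y => ((Fintype.card S : ℂ))⁻¹ * (if x.1 = y.1 then 1 else 0) * X x.2 y.2

/-- `I_S ⊗ X`, the identity on `S` tensored with `X`. -/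
def idFst {S T : Type*} [DecidableEq S] (X : Matrix T T ℂ) :
    Matrix (S × T) (S × T) ℂ :=
  fun x y => (if x.1 = y.1 then 1 else 0) * X x.2 y.2

/-- Partial trace over the second tensor factor. -/
def trOut {S T : Type*} [Fintype T] (X : Matrix (S × T) (S × T) ℂ) : Matrix S S ℂ :=
  fun s s' => ∑ t : T, X (s, t) (s', t)

/-- Partial trace over the first tensor factor. -/
def trInp {S T : Type*} [Fintype S] (X : Matrix (S × T) (S × T) ℂ) : Matrix T T ℂ :=
  fun t t' => ∑ s : S, X (s, t) (s, t')

section FourSystems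

variable {A₀ A₁ B₀ B₁ : Type*} [Fintype A₀] [Fintype A₁] [Fintype B₀] [Fintype B₁]
  [DecidableEq A₀] [DecidableEq A₁] [DecidableEq B₀] [DecidableEq B₁]

/-- `Tr_{A₁}` of a matrix on `A₀ × A₁ × B₀ × B₁`. -/
def trA1 (J : Matrix (A₀ × A₁ × B₀ × B₁) (A₀ × A₁ × B₀ × B₁) ℂ) :
    Matrix (A₀ × B₀ × B₁) (A₀ × B₀ × B₁) ℂ :=
  fun x y => ∑ a : A₁, J (x.1, a, x.2) (y.1, a, y.2)

/-- `Tr_{B₁}` of a matrix on `A₀ × A₁ × B₀ × B₁`. -/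
def trB1 (J : Matrix (A₀ × A₁ × B₀ × B₁) (A₀ × A₁ × B₀ × B₁) ℂ) :
    Matrix (A₀ × A₁ × B₀) (A₀ × A₁ × B₀) ℂ :=
  fun x y => ∑ b : B₁, J (x.1, x.2.1, x.2.2, b) (y.1, y.2.1, y.2.2, b)

/-- `Tr_{A₀A₁}` of a matrix on `A₀ × A₁ × B₀ × B₁`. -/
def trA0A1 (J : Matrix (A₀ × A₁ × B₀ × B₁) (A₀ × A₁ × B₀ × B₁) ℂ) :
    Matrix (B₀ × B₁) (B₀ × B₁) ℂ :=
  fun x y => ∑ a₀ : A₀, ∑ a₁ : A₁, J (a₀, a₁, x) (a₀, a₁, y)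

/-- `Tr_{B₀B₁}` of a matrix on `A₀ × A₁ × B₀ × B₁`. -/
def trB0B1 (J : Matrix (A₀ × A₁ × B₀ × B₁) (A₀ × A₁ × B₀ × B₁) ℂ) :
    Matrix (A₀ × A₁) (A₀ × A₁) ℂ :=
  fun x y => ∑ b₀ : B₀, ∑ b₁ : B₁, J (x.1, x.2, b₀, b₁) (y.1, y.2, b₀, b₁)

/-- `Tr_{A₁B₁}` of a matrix on `A₀ × A₁ × B₀ × B₁`. -/
def trA1B1 (J : Matrix (A₀ × A₁ × B₀ × B₁) (A₀ × A₁ × B₀ × B₁) ℂ) :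
    Matrix (A₀ × B₀) (A₀ × B₀) ℂ :=
  fun x y => ∑ a₁ : A₁, ∑ b₁ : B₁, J (x.1, a₁, x.2, b₁) (y.1, a₁, y.2, b₁)

/-- `π_{B₀} ⊗ Y`, reindexed to `A₀ × A₁ × B₀` with the subsystems in this order. -/
def piB0 (Y : Matrix (A₀ × A₁) (A₀ × A₁) ℂ) :
    Matrix (A₀ × A₁ × B₀) (A₀ × A₁ × B₀) ℂ :=
  fun x y => ((Fintype.card B₀ : ℂ))⁻¹ * (if x.2.2 = y.2.2 then 1 else 0) *
    Y (x.1, x.2.1) (y.1, y.2.1)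

/-- The non-signalling conditions for a Choi matrix on `A₀ × A₁ × B₀ × B₁`:
`Tr_{A₁} J = π_{A₀} ⊗ Tr_{A₀A₁} J` and `Tr_{B₁} J = π_{B₀} ⊗ Tr_{B₀B₁} J`. -/
def NS (J : Matrix (A₀ × A₁ × B₀ × B₁) (A₀ × A₁ × B₀ × B₁) ℂ) : Prop :=
  trA1 J = piFst (trA0A1 J) ∧ trB1 J = piB0 (trB0B1 J)

/-- The optimal value `Λ(J)` of the SDP whose logarithm is the max-relative entropy of
bidirectional classical communication of the bipartite channel with Choi matrix `J`. -/
def Lam (J : Matrix (A₀ × A₁ × B₀ × B₁) (A₀ × A₁ × B₀ × B₁) ℂ) : ℝ :=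
  sInf {l : ℝ | ∃ Y : Matrix (A₀ × A₁ × B₀ × B₁) (A₀ × A₁ × B₀ × B₁) ℂ,
    LoewnerLE J Y ∧ trA1B1 Y = l • (1 : Matrix (A₀ × B₀) (A₀ × B₀) ℂ) ∧ NS Y}

end FourSystems

/-- `N ⊗ I_T` reindexed to `S × T`. -/
def tensIdSnd {S T : Type*} [DecidableEq T] (N : Matrix S S ℂ) :
    Matrix (S × T) (S × T) ℂ :=
  fun u v => N u.1 v.1 * (if u.2 = v.2 then 1 else 0)

open scoped MatrixOrder Matrix.Norms.L2Operator in
theorem trace_mul_re_nonneg' {n : Type*} [Fintype n] [DecidableEq n] {A B : Matrix n n ℂ}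
    (hA : A.PosSemidef) (hB : B.PosSemidef) : 0 ≤ (Matrix.trace (A * B)).re := by
  obtain ⟨C, rfl⟩ := CStarAlgebra.nonneg_iff_eq_star_mul_self.mp hA.nonneg
  have h := (hB.mul_mul_conjTranspose_same C).trace_nonneg
  rw [Matrix.mul_assoc, Matrix.trace_mul_comm]
  exact (Complex.le_def.mp h).1

theorem trace_mul_idFst {S T : Type*} [Fintype S] [Fintype T] [DecidableEq S]
    (M : Matrix (S × T) (S × T) ℂ) (X : Matrix T T ℂ) :
    Matrix.trace (M * idFst X) = Matrix.trace (trInp M * X) := by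
  simp only [Matrix.trace, Matrix.diag, Matrix.mul_apply, idFst, trInp, Fintype.sum_prod_type,
    Finset.sum_mul]
  rw [Finset.sum_comm]
  refine Finset.sum_congr rfl fun t _ => ?_
  conv_rhs => rw [Finset.sum_comm]
  refine Finset.sum_congr rfl fun s _ => ?_
  rw [Finset.sum_comm]
  refine Finset.sum_congr rfl fun t' _ => ?_
  simp

theorem trace_tensIdSnd_mul {S T : Type*} [Fintype S] [Fintype T] [DecidableEq T]
    (N : Matrix S S ℂ) (X : Matrix (S × T) (S × T) ℂ) :
    Matrix.trace (tensIdSnd N * X) = Matrix.trace (N * trOut X) := by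
  simp only [Matrix.trace, Matrix.diag, Matrix.mul_apply, tensIdSnd, trOut,
    Fintype.sum_prod_type, Finset.mul_sum]
  refine Finset.sum_congr rfl fun s _ => ?_
  rw [Finset.sum_comm]
  refine Finset.sum_congr rfl fun s' _ => ?_
  refine Finset.sum_congr rfl fun t _ => ?_
  simp

/-- Weak duality for the SDP of the bipartite conditional min-entropy: any primal
feasible `(m, X)` and dual feasible `(M, N)` satisfy `Re Tr(M K) ≤ m`. -/
theorem weak_duality_min_entropy
    {A₀ B₀ B₁ : Type*}
    [Fintype A₀] [Fintype B₀] [Fintype B₁]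
    [DecidableEq A₀] [DecidableEq B₀] [DecidableEq B₁]
    [Nonempty A₀] [Nonempty B₀] [Nonempty B₁]
    (K : Matrix (A₀ × B₀ × B₁) (A₀ × B₀ × B₁) ℂ) (hK : K.PosSemidef)
    (m : ℝ) (X : Matrix (B₀ × B₁) (B₀ × B₁) ℂ)
    (hX₁ : trOut X = m • (1 : Matrix B₀ B₀ ℂ))
    (hX₂ : LoewnerLE K (idFst X))
    (M : Matrix (A₀ × B₀ × B₁) (A₀ × B₀ × B₁) ℂ)
    (N : Matrix B₀ B₀ ℂ)
    (hM : M.PosSemidef)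
    (hN₁ : N.IsHermitian) (hN₂ : Matrix.trace N = 1)
    (hdual : LoewnerLE (trInp M) (tensIdSnd N)) :
    (Matrix.trace (M * K)).re ≤ m := by
  have hI : (idFst X : Matrix (A₀ × B₀ × B₁) (A₀ × B₀ × B₁) ℂ).PosSemidef := by
    have h := Matrix.PosSemidef.add hX₂ hK
    rwa [sub_add_cancel] at h
  have hX : X.PosSemidef := by
    obtain ⟨a⟩ := ‹Nonempty A₀›
    have h := hI.submatrix (fun t : B₀ × B₁ => (a, t))
    have e : (idFst X : Matrix (A₀ × B₀ × B₁) (A₀ × B₀ × B₁) ℂ).submatrix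
        (fun t : B₀ × B₁ => (a, t)) (fun t : B₀ × B₁ => (a, t)) = X := by
      ext i j
      simp [idFst]
    rwa [e] at h
  have h1 := trace_mul_re_nonneg' hM hX₂
  have h2 := trace_mul_re_nonneg' hdual hX
  rw [Matrix.mul_sub, Matrix.trace_sub, trace_mul_idFst, Complex.sub_re] at h1
  rw [Matrix.sub_mul, Matrix.trace_sub, trace_tensIdSnd_mul, hX₁, Matrix.mul_smul,
    Matrix.mul_one, Matrix.trace_smul, hN₂, Complex.sub_re] at h2
  simp at h2
  linarith
end
end

section
/- Tensor products of primal feasible solutions for the bipartite conditional min-entropy SDP are feasible: let K₁, indexed by A₀ × B₀ × B₁, and K₂, indexed by A₀' × B₀' × B₁', be positive semidefinite. If (m₁, X₁) is feasible for K₁ (i.e. Tr_{B₁} X₁ = m₁ • I_{B₀} and K₁ ≤ I_{A₀} ⊗ X₁) and (m₂, X₂) is feasible for K₂, then (m₁ · m₂, X₁ ⊠ X₂) is feasible for K₁ ⊠ K₂: Tr_{B₁ × B₁'} (X₁ ⊠ X₂) = (m₁ m₂) • I_{B₀ × B₀'} and K₁ ⊠ K₂ ≤ I_{A₀ × A₀'}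 ⊗ (X₁ ⊠ X₂). In particular μ(K₁ ⊠ K₂) ≤ μ(K₁) · μ(K₂). -/
open Matrix
open scoped ComplexOrder

noncomputable section

/-- The optimal value `μ(K)` of the SDP whose negative logarithm is the bipartite
conditional min-entropy `H_min(𝐀|𝐁)` (for `K = Tr_{A₁} J` of a channel Choi matrix `J`). -/
def mu {A₀ B₀ B₁ : Type*} [Fintype A₀] [Fintype B₀] [Fintype B₁]
    [DecidableEq A₀] [DecidableEq B₀]
    (K : Matrix (A₀ × B₀ × B₁) (A₀ × B₀ × B₁) ℂ) : ℝ :=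
  sInf {m : ℝ | ∃ X : Matrix (B₀ × B₁) (B₀ × B₁) ℂ,
    trOut X = m • (1 : Matrix B₀ B₀ ℂ) ∧ LoewnerLE K (idFst X)}

/-- `Tr_{B₁}` of a matrix on `A₀ × B₀ × B₁`. -/
def trLast3 {A₀ B₀ B₁ : Type*} [Fintype B₁]
    (K : Matrix (A₀ × B₀ × B₁) (A₀ × B₀ × B₁) ℂ) : Matrix (A₀ × B₀) (A₀ × B₀) ℂ :=
  fun x y => ∑ b : B₁, K (x.1, x.2, b) (y.1, y.2, b)

/-- Kronecker product of matrices on three-fold systems, reindexed to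
`(A₀ × A₀') × (B₀ × B₀') × (B₁ × B₁')`. -/
def kron3 {A₀ B₀ B₁ A₀' B₀' B₁' : Type*}
    (K₁ : Matrix (A₀ × B₀ × B₁) (A₀ × B₀ × B₁) ℂ)
    (K₂ : Matrix (A₀' × B₀' × B₁') (A₀' × B₀' × B₁') ℂ) :
    Matrix ((A₀ × A₀') × (B₀ × B₀') × (B₁ × B₁'))
      ((A₀ × A₀') × (B₀ × B₀') × (B₁ × B₁')) ℂ :=
  fun x y =>
    K₁ (x.1.1, x.2.1.1, x.2.2.1) (y.1.1, y.2.1.1, y.2.2.1) *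
    K₂ (x.1.2, x.2.1.2, x.2.2.2) (y.1.2, y.2.1.2, y.2.2.2)

/-- Kronecker product of matrices on two-fold systems, reindexed to `(S × S') × (T × T')`. -/
def kron2 {S T S' T' : Type*}
    (X₁ : Matrix (S × T) (S × T) ℂ) (X₂ : Matrix (S' × T') (S' × T') ℂ) :
    Matrix ((S × S') × (T × T')) ((S × S') × (T × T')) ℂ :=
  fun x y => X₁ (x.1.1, x.2.1) (y.1.1, y.2.1) * X₂ (x.1.2, x.2.2) (y.1.2, y.2.2)

theorem aux_kron {A₀ B₀ B₁ A₀' B₀' B₁' : Type*}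
    [Fintype A₀] [Fintype B₀] [Fintype B₁] [Fintype A₀'] [Fintype B₀'] [Fintype B₁']
    {K₁ : Matrix (A₀ × B₀ × B₁) (A₀ × B₀ × B₁) ℂ}
    {K₂ : Matrix (A₀' × B₀' × B₁') (A₀' × B₀' × B₁') ℂ}
    (hK₁ : K₁.PosSemidef) (hK₂ : K₂.PosSemidef) : (kron3 K₁ K₂).PosSemidef :=
  (hK₁.kronecker hK₂).submatrix
    (fun x : (A₀ × A₀') × (B₀ × B₀') × (B₁ × B₁') =>
      ((x.1.1, x.2.1.1, x.2.2.1), (x.1.2, x.2.1.2, x.2.2.2)))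

theorem aux_psd {n : Type*} [Fintype n] {K X : Matrix n n ℂ}
    (hK : K.PosSemidef) (h : LoewnerLE K X) : X.PosSemidef := by
  have := hK.add h
  simpa using this

theorem aux_feas
    {A₀ B₀ B₁ A₀' B₀' B₁' : Type*}
    [Fintype A₀] [Fintype B₀] [Fintype B₁] [Fintype A₀'] [Fintype B₀'] [Fintype B₁']
    [DecidableEq A₀] [DecidableEq B₀]
    [DecidableEq A₀'] [DecidableEq B₀']
    (K₁ : Matrix (A₀ × B₀ × B₁) (A₀ × B₀ × B₁) ℂ)
    (K₂ : Matrix (A₀' × B₀' × B₁') (A₀' × B₀' × B₁') ℂ)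
    (hK₁ : K₁.PosSemidef) (hK₂ : K₂.PosSemidef)
    (m₁ m₂ : ℝ)
    (X₁ : Matrix (B₀ × B₁) (B₀ × B₁) ℂ) (X₂ : Matrix (B₀' × B₁') (B₀' × B₁') ℂ)
    (hX₁₁ : trOut X₁ = m₁ • (1 : Matrix B₀ B₀ ℂ)) (hX₁₂ : LoewnerLE K₁ (idFst X₁))
    (hX₂₁ : trOut X₂ = m₂ • (1 : Matrix B₀' B₀' ℂ)) (hX₂₂ : LoewnerLE K₂ (idFst X₂)) :
    (trOut (kron2 X₁ X₂) = (m₁ * m₂) • (1 : Matrix (B₀ × B₀') (B₀ × B₀') ℂ) ∧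
      LoewnerLE (kron3 K₁ K₂) (idFst (kron2 X₁ X₂))) := by
  constructor
  · ext ⟨a, a'⟩ ⟨b, b'⟩
    have h1 : trOut X₁ a b = (m₁ • (1 : Matrix B₀ B₀ ℂ)) a b := by rw [hX₁₁]
    have h2 : trOut X₂ a' b' = (m₂ • (1 : Matrix B₀' B₀' ℂ)) a' b' := by rw [hX₂₁]
    have h3 : trOut (kron2 X₁ X₂) (a, a') (b, b') = trOut X₁ a b * trOut X₂ a' b' := by
      simp only [trOut, kron2, Fintype.sum_prod_type, Finset.sum_mul_sum]
    rw [h3, h1, h2]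
    by_cases hab : a = b <;> by_cases hab' : a' = b' <;>
      simp [Matrix.one_apply, hab, hab']
  · have e : idFst (kron2 X₁ X₂) - kron3 K₁ K₂ =
        kron3 (idFst X₁ - K₁) (idFst X₂) + kron3 K₁ (idFst X₂ - K₂) := by
      ext ⟨⟨a, a'⟩, ⟨b, b'⟩, ⟨c, c'⟩⟩ ⟨⟨d, d'⟩, ⟨e, e'⟩, ⟨f, f'⟩⟩
      simp only [idFst, kron2, kron3, Matrix.sub_apply, Matrix.add_apply, Prod.mk.injEq]
      by_cases hab : a = d <;> by_cases hab' : a' = d' <;> simp [hab, hab'] <;> ring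
    unfold LoewnerLE
    rw [e]
    exact (aux_kron hX₁₂ (aux_psd hK₂ hX₂₂)).add (aux_kron hK₁ hX₂₂)

theorem aux_nonneg {A₀ B₀ B₁ : Type*} [Fintype A₀] [Fintype B₀] [Fintype B₁]
    [DecidableEq A₀] [DecidableEq B₀] [Nonempty A₀] [Nonempty B₀]
    {K : Matrix (A₀ × B₀ × B₁) (A₀ × B₀ × B₁) ℂ} (hK : K.PosSemidef) {m : ℝ}
    (h : ∃ X : Matrix (B₀ × B₁) (B₀ × B₁) ℂ,
    trOut X = m • (1 : Matrix B₀ B₀ ℂ) ∧ LoewnerLE K (idFst X)) : 0 ≤ m := by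
  obtain ⟨X, h1, h2⟩ := h
  obtain ⟨a⟩ := ‹Nonempty A₀›
  obtain ⟨b⟩ := ‹Nonempty B₀›
  have h3 : trOut X b b = (m • (1 : Matrix B₀ B₀ ℂ)) b b := by rw [h1]
  have h4 : 0 ≤ trOut X b b := by
    refine Finset.sum_nonneg fun t _ => ?_
    have := (aux_psd hK h2).diag_nonneg (i := (a, b, t))
    simpa [idFst] using this
  rw [h3] at h4
  simpa using h4

/-- Tensor products of primal feasible solutions for the bipartite conditional
min-entropy SDP are feasible, and in particular `μ(K₁ ⊠ K₂) ≤ μ(K₁) · μ(K₂)`. -/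
theorem mu_primal_feasible_tensor
    {A₀ B₀ B₁ A₀' B₀' B₁' : Type*}
    [Fintype A₀] [Fintype B₀] [Fintype B₁] [Fintype A₀'] [Fintype B₀'] [Fintype B₁']
    [DecidableEq A₀] [DecidableEq B₀] [DecidableEq B₁]
    [DecidableEq A₀'] [DecidableEq B₀'] [DecidableEq B₁']
    [Nonempty A₀] [Nonempty B₀] [Nonempty B₁] [Nonempty A₀'] [Nonempty B₀'] [Nonempty B₁']
    (K₁ : Matrix (A₀ × B₀ × B₁) (A₀ × B₀ × B₁) ℂ)
    (K₂ : Matrix (A₀' × B₀' × B₁') (A₀' × B₀' × B₁') ℂ)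
    (hK₁ : K₁.PosSemidef) (hK₂ : K₂.PosSemidef)
    (m₁ m₂ : ℝ)
    (X₁ : Matrix (B₀ × B₁) (B₀ × B₁) ℂ) (X₂ : Matrix (B₀' × B₁') (B₀' × B₁') ℂ)
    (hX₁₁ : trOut X₁ = m₁ • (1 : Matrix B₀ B₀ ℂ)) (hX₁₂ : LoewnerLE K₁ (idFst X₁))
    (hX₂₁ : trOut X₂ = m₂ • (1 : Matrix B₀' B₀' ℂ)) (hX₂₂ : LoewnerLE K₂ (idFst X₂)) :
    (trOut (kron2 X₁ X₂) = (m₁ * m₂) • (1 : Matrix (B₀ × B₀') (B₀ × B₀') ℂ) ∧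
      LoewnerLE (kron3 K₁ K₂) (idFst (kron2 X₁ X₂))) ∧
    mu (kron3 K₁ K₂) ≤ mu K₁ * mu K₂ := by
  refine ⟨aux_feas K₁ K₂ hK₁ hK₂ m₁ m₂ X₁ X₂ hX₁₁ hX₁₂ hX₂₁ hX₂₂, ?_⟩
  have key : ∀ a ∈ {m : ℝ | ∃ X : Matrix (B₀ × B₁) (B₀ × B₁) ℂ,
      trOut X = m • (1 : Matrix B₀ B₀ ℂ) ∧ LoewnerLE K₁ (idFst X)},
      ∀ b ∈ {m : ℝ | ∃ X : Matrix (B₀' × B₁') (B₀' × B₁') ℂ,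
      trOut X = m • (1 : Matrix B₀' B₀' ℂ) ∧ LoewnerLE K₂ (idFst X)},
      mu (kron3 K₁ K₂) ≤ a * b := by
    rintro a ⟨X, hX, hX'⟩ b ⟨Y, hY, hY'⟩
    refine csInf_le ⟨0, fun m hm => aux_nonneg (aux_kron hK₁ hK₂) hm⟩ ?_
    exact ⟨_, aux_feas K₁ K₂ hK₁ hK₂ a b X Y hX hX' hY hY'⟩
  have hmu₂ : 0 ≤ mu K₂ := Real.sInf_nonneg fun m hm => aux_nonneg hK₂ hm
  have step : ∀ a ∈ {m : ℝ | ∃ X : Matrix (B₀ × B₁) (B₀ × B₁) ℂ,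
      trOut X = m • (1 : Matrix B₀ B₀ ℂ) ∧ LoewnerLE K₁ (idFst X)},
      mu (kron3 K₁ K₂) ≤ a * mu K₂ := by
    intro a ha
    have : Nonempty {m : ℝ | ∃ X : Matrix (B₀' × B₁') (B₀' × B₁') ℂ,
      trOut X = m • (1 : Matrix B₀' B₀' ℂ) ∧ LoewnerLE K₂ (idFst X)} := ⟨⟨m₂, X₂, hX₂₁, hX₂₂⟩⟩
    rw [mu.eq_def K₂, sInf_eq_iInf', Real.mul_iInf_of_nonneg (aux_nonneg hK₁ ha)]
    exact le_ciInf fun b => key a ha b b.2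
  have : Nonempty {m : ℝ | ∃ X : Matrix (B₀ × B₁) (B₀ × B₁) ℂ,
      trOut X = m • (1 : Matrix B₀ B₀ ℂ) ∧ LoewnerLE K₁ (idFst X)} := ⟨⟨m₁, X₁, hX₁₁, hX₁₂⟩⟩
  rw [mu.eq_def K₁, sInf_eq_iInf', Real.iInf_mul_of_nonneg hmu₂]
  exact le_ciInf fun a => step a a.2
end
end

section
/- Tensor products of dual feasible solutions for the bipartite conditional min-entropy SDP are feasible: suppose M₁ indexed by A₀ × B₀ × B₁ is positive semidefinite, N₁ indexed by B₀ is Hermitian with trace 1 and Tr_{A₀} M₁ ≤ N₁ ⊗ I_{B₁}, and similarly M₂ indexed by A₀' × B₀' × B₁' is positive semidefinite, N₂ indexed by B₀' is Hermitian with trace 1 and Tr_{A₀'} M₂ ≤ N₂ ⊗ I_{B₁'}. Then M₁ ⊠ M₂ is positive semidefinite, N₁ ⊗ N₂ is Hermitian with trace 1, and Tr_{A₀ × A₀'} (M₁ ⊠ M₂) ≤ (N₁ ⊗ N₂) ⊗ I_{B₁ × B₁'} (with the natural reindexings). That is, the product of dual feasible solutions of the SDPs for H_min(𝐀|𝐁)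 of two channels is dual feasible for the SDP of their tensor product. -/
open Matrix
open scoped ComplexOrder

noncomputable section

/-- Kronecker product of two plain matrices. -/
def kronPlain {S S' : Type*} (N₁ : Matrix S S ℂ) (N₂ : Matrix S' S' ℂ) :
    Matrix (S × S') (S × S') ℂ :=
  fun u v => N₁ u.1 v.1 * N₂ u.2 v.2

theorem trInp_psd_aux {S T : Type*} [Fintype S] [Fintype T]
    {X : Matrix (S × T) (S × T) ℂ} (hX : X.PosSemidef) : (trInp X).PosSemidef := by
  have h : trInp X = ∑ s : S, X.submatrix (fun t => (s, t)) (fun t => (s, t)) := by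
    ext t t'
    simp [trInp, Matrix.sum_apply]
  rw [h]
  exact Matrix.posSemidef_sum _ fun s _ => hX.submatrix _

/-- Tensor products of dual feasible solutions for the bipartite conditional min-entropy
SDP are feasible: if `(M₁, N₁)` and `(M₂, N₂)` are dual feasible, then
`(M₁ ⊠ M₂, N₁ ⊗ N₂)` is dual feasible for the tensor-product channel. -/
theorem mu_dual_feasible_tensor
    {A₀ B₀ B₁ A₀' B₀' B₁' : Type*}
    [Fintype A₀] [Fintype B₀] [Fintype B₁] [Fintype A₀'] [Fintype B₀'] [Fintype B₁']
    [DecidableEq A₀] [DecidableEq B₀] [DecidableEq B₁]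
    [DecidableEq A₀'] [DecidableEq B₀'] [DecidableEq B₁']
    [Nonempty A₀] [Nonempty B₀] [Nonempty B₁] [Nonempty A₀'] [Nonempty B₀'] [Nonempty B₁']
    (M₁ : Matrix (A₀ × B₀ × B₁) (A₀ × B₀ × B₁) ℂ) (N₁ : Matrix B₀ B₀ ℂ)
    (M₂ : Matrix (A₀' × B₀' × B₁') (A₀' × B₀' × B₁') ℂ) (N₂ : Matrix B₀' B₀' ℂ)
    (hM₁ : M₁.PosSemidef) (hN₁₁ : N₁.IsHermitian) (hN₁₂ : Matrix.trace N₁ = 1)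
    (hd₁ : LoewnerLE (trInp M₁) (tensIdSnd N₁))
    (hM₂ : M₂.PosSemidef) (hN₂₁ : N₂.IsHermitian) (hN₂₂ : Matrix.trace N₂ = 1)
    (hd₂ : LoewnerLE (trInp M₂) (tensIdSnd N₂)) :
    (kron3 M₁ M₂).PosSemidef ∧
    (kronPlain N₁ N₂).IsHermitian ∧
    Matrix.trace (kronPlain N₁ N₂) = 1 ∧
    LoewnerLE (trInp (kron3 M₁ M₂)) (tensIdSnd (kronPlain N₁ N₂)) := by
  refine ⟨?_, ?_, ?_, ?_⟩
  · exact (hM₁.kronecker hM₂).submatrix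
      (fun x : (A₀ × A₀') × (B₀ × B₀') × (B₁ × B₁') =>
        ((x.1.1, x.2.1.1, x.2.2.1), (x.1.2, x.2.1.2, x.2.2.2)))
  · ext u v
    have h1 := hN₁₁.apply u.1 v.1
    have h2 := hN₂₁.apply u.2 v.2
    simp only [Matrix.conjTranspose_apply, kronPlain, star_mul']
    rw [h1, h2]
  · have h : Matrix.trace (kronPlain N₁ N₂) = Matrix.trace N₁ * Matrix.trace N₂ :=
      Matrix.trace_kronecker N₁ N₂
    rw [h, hN₁₂, hN₂₂, one_mul]
  · unfold LoewnerLE at *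
    have hT1 := trInp_psd_aux hM₁
    have hT2 := trInp_psd_aux hM₂
    have hP2 := hT2.add hd₂
    have key := ((hd₁.kronecker hP2).add (hT1.kronecker hd₂)).submatrix
      (fun x : (B₀ × B₀') × (B₁ × B₁') => ((x.1.1, x.2.1), (x.1.2, x.2.2)))
    have fin : ∀ X Y : Matrix ((B₀ × B₀') × (B₁ × B₁')) ((B₀ × B₀') × (B₁ × B₁')) ℂ,
        X.PosSemidef → Y = X → Y.PosSemidef := fun X Y h e => e ▸ h
    refine fin _ _ key ?_
    ext x y
    have e1 : trInp (kron3 M₁ M₂) x y =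
        trInp M₁ (x.1.1, x.2.1) (y.1.1, y.2.1) * trInp M₂ (x.1.2, x.2.2) (y.1.2, y.2.2) := by
      simp only [trInp, kron3, Fintype.sum_prod_type, Finset.sum_mul_sum]
    have e2 : (tensIdSnd (kronPlain N₁ N₂) : Matrix ((B₀ × B₀') × (B₁ × B₁')) _ ℂ) x y =
        (tensIdSnd N₁ : Matrix (B₀ × B₁) _ ℂ) (x.1.1, x.2.1) (y.1.1, y.2.1) *
        (tensIdSnd N₂ : Matrix (B₀' × B₁') _ ℂ) (x.1.2, x.2.2) (y.1.2, y.2.2) := by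
      simp only [tensIdSnd, kronPlain, Prod.ext_iff]
      by_cases a : x.2.1 = y.2.1 <;> by_cases b : x.2.2 = y.2.2 <;> simp [a, b]
    simp only [Matrix.sub_apply, Matrix.submatrix_apply, Matrix.add_apply,
      Matrix.kroneckerMap_apply, e1, e2]
    ring
end
end

section
/- Any non-signalling bipartite superchannel applied to the noiseless bidirectional classical channel Υ_m yields a channel whose max-relative entropy of bidirectional classical communication is at most log m: let m ≥ 2, let Ā₀ = Ā₁ = B̄₀ = B̄₁ = Fin m, let A₀, A₁, B₀, B₁ be finite nonempty types, and let J^Θ, indexed by A₀ × Ā₀ × Ā₁ × A₁ × B₀ × B̄₀ × B̄₁ × B₁, satisfy the Choi-matrix conditions of a non-signalling bipartite superchannel: J^Θ positive semidefinite; Tr_{Ā₀ A₁ B̄₀ B₁} J^Θ = I_{A₀ Ā₁ B₀ B̄₁}; Tr_{Ā₀ A₁} J^Θ = π_{A₀} ⊗ Tr_{A₀ Ā₀ A₁} J^Θ; Tr_{A₁} J^Θ = π_{Ā₁} ⊗ Tr_{Ā₁ A₁} J^Θ; Tr_{B̄₀ B₁} J^Θ = π_{B₀} ⊗ Tr_{B₀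 B̄₀ B₁} J^Θ; Tr_{B₁} J^Θ = π_{B̄₁} ⊗ Tr_{B̄₁ B₁} J^Θ. Let C = C_{Ā₀B̄₁} ⊠ C_{B̄₀Ā₁} (indexed by Ā₀ × Ā₁ × B̄₀ × B̄₁, with C_{ST} = ∑_k E_{kk} ⊗ E_{kk}) be the Choi matrix of Υ_m, and let J^out, indexed by A₀ × A₁ × B₀ × B₁, be the link product J^out(x, x') = ∑_{ȳ, ȳ'} J^Θ(ι(x, ȳ), ι(x', ȳ')) · C(ȳ', ȳ), where ι interleaves indices into the order A₀, Ā₀, Ā₁, A₁, B₀, B̄₀, B̄₁, B₁. Then Λ(J^out) ≤ m. -/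
open Matrix
open scoped ComplexOrder

noncomputable section

/-- `C_{ST} = ∑ k, E_{kk} ⊗ E_{kk}`, the Choi matrix of the noiseless classical channel
on `m` messages (indexed by `Fin m × Fin m`). -/
def classChoi (m : ℕ) : Matrix (Fin m × Fin m) (Fin m × Fin m) ℂ :=
  fun x y => if x.1 = x.2 ∧ y.1 = y.2 ∧ x.1 = y.1 then 1 else 0

/-- `C = C_{A₀B₁} ⊠ C_{B₀A₁}`, the Choi matrix of the noiseless bidirectional classical
channel `Υ_m`, indexed by `A₀ × A₁ × B₀ × B₁` (all equal to `Fin m`). -/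
def upsChoi (m : ℕ) : Matrix (Fin m × Fin m × Fin m × Fin m) (Fin m × Fin m × Fin m × Fin m) ℂ :=
  fun x y =>
    classChoi m (x.1, x.2.2.2) (y.1, y.2.2.2) * classChoi m (x.2.2.1, x.2.1) (y.2.2.1, y.2.1)

/-- `J′ = (1/m) • (C_{A₀B₁} ⊠ C_{B₀A₁})
      + (1/(m(m−1))) • ((I − C)_{A₀B₁} ⊠ (I − C)_{B₀A₁})`,
indexed by `A₀ × A₁ × B₀ × B₁` (all equal to `Fin m`). -/
def Jprime (m : ℕ) : Matrix (Fin m × Fin m × Fin m × Fin m) (Fin m × Fin m × Fin m × Fin m) ℂ :=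
  fun x y =>
    (m : ℂ)⁻¹ *
      (classChoi m (x.1, x.2.2.2) (y.1, y.2.2.2) *
        classChoi m (x.2.2.1, x.2.1) (y.2.2.1, y.2.1)) +
    ((m : ℂ) * ((m : ℂ) - 1))⁻¹ *
      ((1 - classChoi m) (x.1, x.2.2.2) (y.1, y.2.2.2) *
        (1 - classChoi m) (x.2.2.1, x.2.1) (y.2.2.1, y.2.1))

section Superchannel

variable {A0 Ab0 Ab1 A1 B0 Bb0 Bb1 B1 : Type*}
  [Fintype A0] [Fintype Ab0] [Fintype Ab1] [Fintype A1]
  [Fintype B0] [Fintype Bb0] [Fintype Bb1] [Fintype B1]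
  [DecidableEq A0] [DecidableEq Ab0] [DecidableEq Ab1] [DecidableEq A1]
  [DecidableEq B0] [DecidableEq Bb0] [DecidableEq Bb1] [DecidableEq B1]

/-- `Tr_{Ā₀ A₁ B̄₀ B₁} J^Θ`, indexed by `A₀ × Ā₁ × B₀ × B̄₁`. -/
def scTP (J : Matrix (A0 × Ab0 × Ab1 × A1 × B0 × Bb0 × Bb1 × B1)
      (A0 × Ab0 × Ab1 × A1 × B0 × Bb0 × Bb1 × B1) ℂ) :
    Matrix (A0 × Ab1 × B0 × Bb1) (A0 × Ab1 × B0 × Bb1) ℂ :=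
  fun x y => ∑ ab0 : Ab0, ∑ a1 : A1, ∑ bb0 : Bb0, ∑ b1 : B1,
    J (x.1, ab0, x.2.1, a1, x.2.2.1, bb0, x.2.2.2, b1)
      (y.1, ab0, y.2.1, a1, y.2.2.1, bb0, y.2.2.2, b1)

/-- `Tr_{Ā₀ A₁} J^Θ`, indexed by `A₀ × Ā₁ × B₀ × B̄₀ × B̄₁ × B₁`. -/
def scTrAb0A1 (J : Matrix (A0 × Ab0 × Ab1 × A1 × B0 × Bb0 × Bb1 × B1)
      (A0 × Ab0 × Ab1 × A1 × B0 × Bb0 × Bb1 × B1) ℂ) :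
    Matrix (A0 × Ab1 × B0 × Bb0 × Bb1 × B1) (A0 × Ab1 × B0 × Bb0 × Bb1 × B1) ℂ :=
  fun x y => ∑ ab0 : Ab0, ∑ a1 : A1,
    J (x.1, ab0, x.2.1, a1, x.2.2) (y.1, ab0, y.2.1, a1, y.2.2)

/-- `Tr_{A₀ Ā₀ A₁} J^Θ`, indexed by `Ā₁ × B₀ × B̄₀ × B̄₁ × B₁`. -/
def scTrA0Ab0A1 (J : Matrix (A0 × Ab0 × Ab1 × A1 × B0 × Bb0 × Bb1 × B1)
      (A0 × Ab0 × Ab1 × A1 × B0 × Bb0 × Bb1 × B1) ℂ) :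
    Matrix (Ab1 × B0 × Bb0 × Bb1 × B1) (Ab1 × B0 × Bb0 × Bb1 × B1) ℂ :=
  fun x y => ∑ a0 : A0, ∑ ab0 : Ab0, ∑ a1 : A1,
    J (a0, ab0, x.1, a1, x.2) (a0, ab0, y.1, a1, y.2)

/-- `Tr_{A₁} J^Θ`, indexed by `A₀ × Ā₀ × Ā₁ × B₀ × B̄₀ × B̄₁ × B₁`. -/
def scTrA1 (J : Matrix (A0 × Ab0 × Ab1 × A1 × B0 × Bb0 × Bb1 × B1)
      (A0 × Ab0 × Ab1 × A1 × B0 × Bb0 × Bb1 × B1) ℂ) :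
    Matrix (A0 × Ab0 × Ab1 × B0 × Bb0 × Bb1 × B1)
      (A0 × Ab0 × Ab1 × B0 × Bb0 × Bb1 × B1) ℂ :=
  fun x y => ∑ a1 : A1,
    J (x.1, x.2.1, x.2.2.1, a1, x.2.2.2) (y.1, y.2.1, y.2.2.1, a1, y.2.2.2)

/-- `Tr_{Ā₁ A₁} J^Θ`, indexed by `A₀ × Ā₀ × B₀ × B̄₀ × B̄₁ × B₁`. -/
def scTrAb1A1 (J : Matrix (A0 × Ab0 × Ab1 × A1 × B0 × Bb0 × Bb1 × B1)
      (A0 × Ab0 × Ab1 × A1 × B0 × Bb0 × Bb1 × B1) ℂ) :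
    Matrix (A0 × Ab0 × B0 × Bb0 × Bb1 × B1) (A0 × Ab0 × B0 × Bb0 × Bb1 × B1) ℂ :=
  fun x y => ∑ ab1 : Ab1, ∑ a1 : A1,
    J (x.1, x.2.1, ab1, a1, x.2.2) (y.1, y.2.1, ab1, a1, y.2.2)

/-- `π_{Ā₁} ⊗ Y` with `π_{Ā₁}` inserted in the third slot of
`A₀ × Ā₀ × Ā₁ × B₀ × B̄₀ × B̄₁ × B₁`. -/
def piAb1 (Y : Matrix (A0 × Ab0 × B0 × Bb0 × Bb1 × B1) (A0 × Ab0 × B0 × Bb0 × Bb1 × B1) ℂ) :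
    Matrix (A0 × Ab0 × Ab1 × B0 × Bb0 × Bb1 × B1)
      (A0 × Ab0 × Ab1 × B0 × Bb0 × Bb1 × B1) ℂ :=
  fun x y => ((Fintype.card Ab1 : ℂ))⁻¹ * (if x.2.2.1 = y.2.2.1 then 1 else 0) *
    Y (x.1, x.2.1, x.2.2.2) (y.1, y.2.1, y.2.2.2)

/-- `Tr_{B̄₀ B₁} J^Θ`, indexed by `A₀ × Ā₀ × Ā₁ × A₁ × B₀ × B̄₁`. -/
def scTrBb0B1 (J : Matrix (A0 × Ab0 × Ab1 × A1 × B0 × Bb0 × Bb1 × B1)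
      (A0 × Ab0 × Ab1 × A1 × B0 × Bb0 × Bb1 × B1) ℂ) :
    Matrix (A0 × Ab0 × Ab1 × A1 × B0 × Bb1) (A0 × Ab0 × Ab1 × A1 × B0 × Bb1) ℂ :=
  fun x y => ∑ bb0 : Bb0, ∑ b1 : B1,
    J (x.1, x.2.1, x.2.2.1, x.2.2.2.1, x.2.2.2.2.1, bb0, x.2.2.2.2.2, b1)
      (y.1, y.2.1, y.2.2.1, y.2.2.2.1, y.2.2.2.2.1, bb0, y.2.2.2.2.2, b1)

/-- `Tr_{B₀ B̄₀ B₁} J^Θ`, indexed by `A₀ × Ā₀ × Ā₁ × A₁ × B̄₁`. -/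
def scTrB0Bb0B1 (J : Matrix (A0 × Ab0 × Ab1 × A1 × B0 × Bb0 × Bb1 × B1)
      (A0 × Ab0 × Ab1 × A1 × B0 × Bb0 × Bb1 × B1) ℂ) :
    Matrix (A0 × Ab0 × Ab1 × A1 × Bb1) (A0 × Ab0 × Ab1 × A1 × Bb1) ℂ :=
  fun x y => ∑ b0 : B0, ∑ bb0 : Bb0, ∑ b1 : B1,
    J (x.1, x.2.1, x.2.2.1, x.2.2.2.1, b0, bb0, x.2.2.2.2, b1)
      (y.1, y.2.1, y.2.2.1, y.2.2.2.1, b0, bb0, y.2.2.2.2, b1)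

/-- `π_{B₀} ⊗ Y` with `π_{B₀}` inserted in the fifth slot of
`A₀ × Ā₀ × Ā₁ × A₁ × B₀ × B̄₁`. -/
def piB0sc (Y : Matrix (A0 × Ab0 × Ab1 × A1 × Bb1) (A0 × Ab0 × Ab1 × A1 × Bb1) ℂ) :
    Matrix (A0 × Ab0 × Ab1 × A1 × B0 × Bb1) (A0 × Ab0 × Ab1 × A1 × B0 × Bb1) ℂ :=
  fun x y => ((Fintype.card B0 : ℂ))⁻¹ * (if x.2.2.2.2.1 = y.2.2.2.2.1 then 1 else 0) *
    Y (x.1, x.2.1, x.2.2.1, x.2.2.2.1, x.2.2.2.2.2) (y.1, y.2.1, y.2.2.1, y.2.2.2.1, y.2.2.2.2.2)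

/-- `Tr_{B₁} J^Θ`, indexed by `A₀ × Ā₀ × Ā₁ × A₁ × B₀ × B̄₀ × B̄₁`. -/
def scTrB1 (J : Matrix (A0 × Ab0 × Ab1 × A1 × B0 × Bb0 × Bb1 × B1)
      (A0 × Ab0 × Ab1 × A1 × B0 × Bb0 × Bb1 × B1) ℂ) :
    Matrix (A0 × Ab0 × Ab1 × A1 × B0 × Bb0 × Bb1)
      (A0 × Ab0 × Ab1 × A1 × B0 × Bb0 × Bb1) ℂ :=
  fun x y => ∑ b1 : B1,
    J (x.1, x.2.1, x.2.2.1, x.2.2.2.1, x.2.2.2.2.1, x.2.2.2.2.2.1, x.2.2.2.2.2.2, b1)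
      (y.1, y.2.1, y.2.2.1, y.2.2.2.1, y.2.2.2.2.1, y.2.2.2.2.2.1, y.2.2.2.2.2.2, b1)

/-- `Tr_{B̄₁ B₁} J^Θ`, indexed by `A₀ × Ā₀ × Ā₁ × A₁ × B₀ × B̄₀`. -/
def scTrBb1B1 (J : Matrix (A0 × Ab0 × Ab1 × A1 × B0 × Bb0 × Bb1 × B1)
      (A0 × Ab0 × Ab1 × A1 × B0 × Bb0 × Bb1 × B1) ℂ) :
    Matrix (A0 × Ab0 × Ab1 × A1 × B0 × Bb0) (A0 × Ab0 × Ab1 × A1 × B0 × Bb0) ℂ :=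
  fun x y => ∑ bb1 : Bb1, ∑ b1 : B1,
    J (x.1, x.2.1, x.2.2.1, x.2.2.2.1, x.2.2.2.2.1, x.2.2.2.2.2, bb1, b1)
      (y.1, y.2.1, y.2.2.1, y.2.2.2.1, y.2.2.2.2.1, y.2.2.2.2.2, bb1, b1)

/-- `π_{B̄₁} ⊗ Y` with `π_{B̄₁}` inserted in the seventh slot of
`A₀ × Ā₀ × Ā₁ × A₁ × B₀ × B̄₀ × B̄₁`. -/
def piBb1sc (Y : Matrix (A0 × Ab0 × Ab1 × A1 × B0 × Bb0) (A0 × Ab0 × Ab1 × A1 × B0 × Bb0) ℂ) :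
    Matrix (A0 × Ab0 × Ab1 × A1 × B0 × Bb0 × Bb1)
      (A0 × Ab0 × Ab1 × A1 × B0 × Bb0 × Bb1) ℂ :=
  fun x y => ((Fintype.card Bb1 : ℂ))⁻¹ * (if x.2.2.2.2.2.2 = y.2.2.2.2.2.2 then 1 else 0) *
    Y (x.1, x.2.1, x.2.2.1, x.2.2.2.1, x.2.2.2.2.1, x.2.2.2.2.2.1)
      (y.1, y.2.1, y.2.2.1, y.2.2.2.1, y.2.2.2.2.1, y.2.2.2.2.2.1)

/-- The link product `J^out(x, x') = ∑_{ȳ, ȳ'} J^Θ(ι(x,ȳ), ι(x',ȳ')) · J^N(ȳ', ȳ)`,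
the Choi matrix of the channel obtained by applying the superchannel with Choi matrix
`J^Θ` to the channel with Choi matrix `J^N`. -/
def linkOut (JΘ : Matrix (A0 × Ab0 × Ab1 × A1 × B0 × Bb0 × Bb1 × B1)
      (A0 × Ab0 × Ab1 × A1 × B0 × Bb0 × Bb1 × B1) ℂ)
    (JN : Matrix (Ab0 × Ab1 × Bb0 × Bb1) (Ab0 × Ab1 × Bb0 × Bb1) ℂ) :
    Matrix (A0 × A1 × B0 × B1) (A0 × A1 × B0 × B1) ℂ :=
  fun x y => ∑ z : Ab0 × Ab1 × Bb0 × Bb1, ∑ w : Ab0 × Ab1 × Bb0 × Bb1,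
    JΘ (x.1, z.1, z.2.1, x.2.1, x.2.2.1, z.2.2.1, z.2.2.2, x.2.2.2)
       (y.1, w.1, w.2.1, y.2.1, y.2.2.1, w.2.2.1, w.2.2.2, y.2.2.2) * JN w z

end Superchannel

/-- Diagonal of `Υ_m`. -/
def uDiag (m : ℕ) (z : Fin m × Fin m × Fin m × Fin m) : ℝ :=
  if z.1 = z.2.2.2 ∧ z.2.2.1 = z.2.1 then 1 else 0

/-- Diagonal of the slack part. -/
def vDiag (m : ℕ) (z : Fin m × Fin m × Fin m × Fin m) : ℝ :=
  if z.1 ≠ z.2.2.2 ∧ z.2.2.1 ≠ z.2.1 then ((m : ℝ) - 1)⁻¹ else 0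

/-- Diagonal of `m J'`. -/
def dDiag (m : ℕ) (z : Fin m × Fin m × Fin m × Fin m) : ℂ :=
  (uDiag m z : ℂ) + (vDiag m z : ℂ)

lemma upsChoi_diag (m : ℕ) (w z : Fin m × Fin m × Fin m × Fin m) :
    upsChoi m w z = if w = z then (uDiag m z : ℂ) else 0 := by
  obtain ⟨a, b, c, d⟩ := w
  obtain ⟨a', b', c', d'⟩ := z
  simp only [upsChoi, classChoi, uDiag, Prod.mk.injEq, apply_ite Complex.ofReal,
    Complex.ofReal_one, Complex.ofReal_zero]
  split_ifs <;> grind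

lemma sum_ne_inv (m : ℕ) (hm : 2 ≤ m) (p : Fin m) :
    ∑ q : Fin m, (if p ≠ q then ((m : ℂ) - 1)⁻¹ else 0) = 1 := by
  have h1 : (m : ℂ) - 1 ≠ 0 := by
    rw [sub_ne_zero]
    exact_mod_cast (by omega : m ≠ 1)
  have : ∀ q : Fin m, (if p ≠ q then ((m : ℂ) - 1)⁻¹ else 0)
      = ((m : ℂ) - 1)⁻¹ - (if p = q then ((m : ℂ) - 1)⁻¹ else 0) := by
    intro q; split_ifs <;> simp_all
  simp only [this, Finset.sum_sub_distrib, Finset.sum_ite_eq, Finset.mem_univ, if_true,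
    Finset.sum_const, Finset.card_univ, Fintype.card_fin, nsmul_eq_mul]
  field_simp

lemma dDiag_sumA (m : ℕ) (hm : 2 ≤ m) (a b b' : Fin m) :
    ∑ a' : Fin m, dDiag m (a, a', b, b') = 1 := by
  simp only [dDiag, uDiag, vDiag, apply_ite Complex.ofReal, Complex.ofReal_one,
    Complex.ofReal_zero, Complex.ofReal_inv, Complex.ofReal_sub, Complex.ofReal_natCast]
  by_cases h : a = b'
  · simp [h]
  · have := sum_ne_inv m hm b
    simpa [h] using this

lemma dDiag_sumB (m : ℕ) (hm : 2 ≤ m) (a a' b : Fin m) :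
    ∑ b' : Fin m, dDiag m (a, a', b, b') = 1 := by
  simp only [dDiag, uDiag, vDiag, apply_ite Complex.ofReal, Complex.ofReal_one,
    Complex.ofReal_zero, Complex.ofReal_inv, Complex.ofReal_sub, Complex.ofReal_natCast]
  by_cases h : b = a'
  · simp [h]
  · have := sum_ne_inv m hm a
    simpa [h] using this

lemma dDiag_linkA (m : ℕ) (hm : 2 ≤ m) (f : Fin m → Fin m → Fin m → ℂ) :
    ∑ z, dDiag m z * ((m : ℂ)⁻¹ * f z.1 z.2.2.1 z.2.2.2)
      = (m : ℂ)⁻¹ * ∑ b, ∑ b', ∑ a, f a b b' := by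
  simp only [Fintype.sum_prod_type]
  calc _ = ∑ a, ∑ b, ∑ b', ∑ a', dDiag m (a, a', b, b') * ((m : ℂ)⁻¹ * f a b b') := by
        refine Finset.sum_congr rfl fun a _ => ?_
        rw [Finset.sum_comm]
        refine Finset.sum_congr rfl fun b _ => ?_
        rw [Finset.sum_comm]
    _ = ∑ a, ∑ b, ∑ b', (m : ℂ)⁻¹ * f a b b' := by
        simp only [← Finset.sum_mul, dDiag_sumA m hm, one_mul]
    _ = _ := by
        simp only [← Finset.mul_sum]
        congr 1
        rw [Finset.sum_comm]
        refine Finset.sum_congr rfl fun b _ => ?_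
        rw [Finset.sum_comm]

lemma dDiag_linkB (m : ℕ) (hm : 2 ≤ m) (f : Fin m → Fin m → Fin m → ℂ) :
    ∑ z, dDiag m z * ((m : ℂ)⁻¹ * f z.1 z.2.1 z.2.2.1)
      = (m : ℂ)⁻¹ * ∑ a, ∑ a', ∑ b, f a a' b := by
  simp only [Fintype.sum_prod_type, ← Finset.sum_mul, dDiag_sumB m hm, one_mul, ← Finset.mul_sum]

section
set_option linter.unusedSectionVars false
variable {A0 A1 B0 B1 : Type*}
    [Fintype A0] [Fintype A1] [Fintype B0] [Fintype B1]
    [DecidableEq A0] [DecidableEq A1] [DecidableEq B0] [DecidableEq B1]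
    [Nonempty A0] [Nonempty A1] [Nonempty B0] [Nonempty B1]

/-- Interleaving of indices. -/
def iotaIdx (m : ℕ) (z : Fin m × Fin m × Fin m × Fin m) (x : A0 × A1 × B0 × B1) :
    A0 × Fin m × Fin m × A1 × B0 × Fin m × Fin m × B1 :=
  (x.1, z.1, z.2.1, x.2.1, x.2.2.1, z.2.2.1, z.2.2.2, x.2.2.2)

/-- The feasible point. -/
def feasY (m : ℕ) (JΘ : Matrix (A0 × Fin m × Fin m × A1 × B0 × Fin m × Fin m × B1)
      (A0 × Fin m × Fin m × A1 × B0 × Fin m × Fin m × B1) ℂ) :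
    Matrix (A0 × A1 × B0 × B1) (A0 × A1 × B0 × B1) ℂ :=
  fun x y => ∑ z, dDiag m z * JΘ (iotaIdx m z x) (iotaIdx m z y)

lemma push_four {P Q R S T : Type*} [Fintype P] [Fintype Q] [Fintype R] [Fintype S] [Fintype T]
    (F : P → Q → R → S → T → ℂ) :
    ∑ p, ∑ q, ∑ r, ∑ s, ∑ t, F p q r s t = ∑ q, ∑ r, ∑ s, ∑ t, ∑ p, F p q r s t := by
  rw [Finset.sum_comm]
  refine Finset.sum_congr rfl fun q _ => ?_
  rw [Finset.sum_comm]
  refine Finset.sum_congr rfl fun r _ => ?_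
  rw [Finset.sum_comm]
  refine Finset.sum_congr rfl fun s _ => ?_
  rw [Finset.sum_comm]

lemma feas_psd (m : ℕ) (hm : 2 ≤ m)
    (JΘ : Matrix (A0 × Fin m × Fin m × A1 × B0 × Fin m × Fin m × B1)
      (A0 × Fin m × Fin m × A1 × B0 × Fin m × Fin m × B1) ℂ)
    (hΘ₁ : JΘ.PosSemidef) : LoewnerLE (linkOut JΘ (upsChoi m)) (feasY m JΘ) := by
  unfold LoewnerLE
  have : feasY m JΘ - linkOut JΘ (upsChoi m)
      = ∑ z, (vDiag m z) • JΘ.submatrix (iotaIdx m z) (iotaIdx m z) := by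
    ext x y
    simp only [Matrix.sub_apply, Matrix.sum_apply, Matrix.smul_apply, Matrix.submatrix_apply,
      feasY, linkOut, upsChoi_diag, mul_ite, mul_zero, Finset.sum_ite_eq', Finset.mem_univ, if_true,
      ← Finset.sum_sub_distrib]
    refine Finset.sum_congr rfl fun z _ => ?_
    simp only [dDiag, iotaIdx, Complex.real_smul]
    ring
  rw [this]
  refine Matrix.posSemidef_sum _ fun z _ => ?_
  refine (hΘ₁.submatrix _).smul ?_
  unfold vDiag
  split_ifs
  · rw [inv_nonneg, sub_nonneg]; exact_mod_cast (by omega : 1 ≤ m)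
  · exact le_rfl

lemma feas_trA1 (m : ℕ) (hm : 2 ≤ m)
    (JΘ : Matrix (A0 × Fin m × Fin m × A1 × B0 × Fin m × Fin m × B1)
      (A0 × Fin m × Fin m × A1 × B0 × Fin m × Fin m × B1) ℂ)
    (hΘ₄ : scTrA1 JΘ = piAb1 (scTrAb1A1 JΘ)) (x y : A0 × B0 × B1) :
    trA1 (feasY m JΘ) x y = (m : ℂ)⁻¹ * ∑ b, ∑ b', ∑ a',
      scTrAb0A1 JΘ (x.1, a', x.2.1, b, b', x.2.2) (y.1, a', y.2.1, b, b', y.2.2) := by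
  have h : trA1 (feasY m JΘ) x y = ∑ z, dDiag m z * ((m : ℂ)⁻¹ *
      scTrAb1A1 JΘ (x.1, z.1, x.2.1, z.2.2.1, z.2.2.2, x.2.2)
        (y.1, z.1, y.2.1, z.2.2.1, z.2.2.2, y.2.2)) := by
    simp only [trA1, feasY]
    rw [Finset.sum_comm]
    refine Finset.sum_congr rfl fun z _ => ?_
    rw [← Finset.mul_sum]
    congr 1
    have := congrFun (congrFun hΘ₄ (x.1, z.1, z.2.1, x.2.1, z.2.2.1, z.2.2.2, x.2.2))
      (y.1, z.1, z.2.1, y.2.1, z.2.2.1, z.2.2.2, y.2.2)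
    simpa [scTrA1, piAb1, iotaIdx, scTrAb1A1] using this
  rw [h, dDiag_linkA m hm (fun a b b' => scTrAb1A1 JΘ (x.1, a, x.2.1, b, b', x.2.2)
        (y.1, a, y.2.1, b, b', y.2.2))]
  congr 1
  refine Finset.sum_congr rfl fun b _ => Finset.sum_congr rfl fun b' _ => ?_
  simp only [scTrAb1A1, scTrAb0A1]
  rw [Finset.sum_comm]

lemma feas_trB1 (m : ℕ) (hm : 2 ≤ m)
    (JΘ : Matrix (A0 × Fin m × Fin m × A1 × B0 × Fin m × Fin m × B1)
      (A0 × Fin m × Fin m × A1 × B0 × Fin m × Fin m × B1) ℂ)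
    (hΘ₆ : scTrB1 JΘ = piBb1sc (scTrBb1B1 JΘ)) (x y : A0 × A1 × B0) :
    trB1 (feasY m JΘ) x y = (m : ℂ)⁻¹ * ∑ a, ∑ a', ∑ b',
      scTrBb0B1 JΘ (x.1, a, a', x.2.1, x.2.2, b') (y.1, a, a', y.2.1, y.2.2, b') := by
  have h : trB1 (feasY m JΘ) x y = ∑ z, dDiag m z * ((m : ℂ)⁻¹ *
      scTrBb1B1 JΘ (x.1, z.1, z.2.1, x.2.1, x.2.2, z.2.2.1)
        (y.1, z.1, z.2.1, y.2.1, y.2.2, z.2.2.1)) := by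
    simp only [trB1, feasY]
    rw [Finset.sum_comm]
    refine Finset.sum_congr rfl fun z _ => ?_
    rw [← Finset.mul_sum]
    congr 1
    have := congrFun (congrFun hΘ₆ (x.1, z.1, z.2.1, x.2.1, x.2.2, z.2.2.1, z.2.2.2))
      (y.1, z.1, z.2.1, y.2.1, y.2.2, z.2.2.1, z.2.2.2)
    simpa [scTrB1, piBb1sc, iotaIdx, scTrBb1B1] using this
  rw [h, dDiag_linkB m hm (fun a a' b => scTrBb1B1 JΘ (x.1, a, a', x.2.1, x.2.2, b)
        (y.1, a, a', y.2.1, y.2.2, b))]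
  congr 1
  refine Finset.sum_congr rfl fun a _ => Finset.sum_congr rfl fun a' _ => ?_
  simp only [scTrBb1B1, scTrBb0B1]
  rw [Finset.sum_comm]

lemma feas_NSA (Y : Matrix (A0 × A1 × B0 × B1) (A0 × A1 × B0 × B1) ℂ)
    (g : B0 × B1 → B0 × B1 → ℂ)
    (h : ∀ x y, trA1 Y x y = (if x.1 = y.1 then 1 else 0) * g x.2 y.2) :
    trA1 Y = piFst (trA0A1 Y) := by
  have h2 : ∀ u v, trA0A1 Y u v = Fintype.card A0 * g u v := by
    intro u v
    have : trA0A1 Y u v = ∑ a0 : A0, trA1 Y (a0, u) (a0, v) := rfl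
    rw [this]
    simp [h]
  have hc : (Fintype.card A0 : ℂ) ≠ 0 := by simp
  ext x y
  rw [h, piFst, h2]
  field_simp

lemma feas_NSB (Y : Matrix (A0 × A1 × B0 × B1) (A0 × A1 × B0 × B1) ℂ)
    (g : A0 × A1 → A0 × A1 → ℂ)
    (h : ∀ x y, trB1 Y x y = (if x.2.2 = y.2.2 then 1 else 0) * g (x.1, x.2.1) (y.1, y.2.1)) :
    trB1 Y = piB0 (trB0B1 Y) := by
  have h2 : ∀ u v, trB0B1 Y u v = Fintype.card B0 * g u v := by
    intro u v
    have : trB0B1 Y u v = ∑ b0 : B0, trB1 Y (u.1, u.2, b0) (v.1, v.2, b0) := rfl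
    rw [this]
    simp [h]
  have hc : (Fintype.card B0 : ℂ) ≠ 0 := by simp
  ext x y
  rw [h, piB0, h2]
  field_simp

lemma feas_tr (m : ℕ) (hm : 2 ≤ m)
    (JΘ : Matrix (A0 × Fin m × Fin m × A1 × B0 × Fin m × Fin m × B1)
      (A0 × Fin m × Fin m × A1 × B0 × Fin m × Fin m × B1) ℂ)
    (hΘ₂ : scTP JΘ = 1)
    (hΘ₄ : scTrA1 JΘ = piAb1 (scTrAb1A1 JΘ)) :
    trA1B1 (feasY m JΘ) = (m : ℝ) • (1 : Matrix (A0 × B0) (A0 × B0) ℂ) := by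
  ext x y
  have h1 : trA1B1 (feasY m JΘ) x y
      = ∑ b1 : B1, trA1 (feasY m JΘ) (x.1, x.2, b1) (y.1, y.2, b1) := by
    simp only [trA1B1, trA1]
    rw [Finset.sum_comm]
  have h2 : trA1B1 (feasY m JΘ) x y = (m : ℂ)⁻¹ * ∑ b', ∑ a',
      scTP JΘ (x.1, a', x.2, b') (y.1, a', y.2, b') := by
    rw [h1]
    simp only [feas_trA1 m hm JΘ hΘ₄]
    rw [← Finset.mul_sum]
    congr 1
    simp only [scTP, scTrAb0A1]
    rw [Finset.sum_comm]
    rw [Finset.sum_congr rfl fun b _ => push_four _, push_four]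
  have hm0 : (m : ℂ) ≠ 0 := by exact_mod_cast (by omega : m ≠ 0)
  rw [h2, hΘ₂]
  by_cases hxy : x = y
  · subst hxy
    simp
    field_simp
  · have hne : ∀ a' b', ¬ ((x.1, a', x.2, b') : A0 × Fin m × B0 × Fin m) = (y.1, a', y.2, b') := by
      intro a' b' h
      apply hxy
      simp only [Prod.mk.injEq] at h
      exact Prod.ext h.1 h.2.2.1
    simp [hne, hxy]

end

/-- Any non-signalling bipartite superchannel applied to the noiseless bidirectional
classical channel `Υ_m` yields a channel whose max-relative entropy of bidirectional
classical communication is at most `log m`: for the link product `J^out` of a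
non-signalling bipartite superchannel Choi matrix `J^Θ` with the Choi matrix
`C = C_{Ā₀B̄₁} ⊠ C_{B̄₀Ā₁}` of `Υ_m`, one has `Λ(J^out) ≤ m`. -/
theorem lam_superchannel_ups_le
    {A0 A1 B0 B1 : Type*}
    [Fintype A0] [Fintype A1] [Fintype B0] [Fintype B1]
    [DecidableEq A0] [DecidableEq A1] [DecidableEq B0] [DecidableEq B1]
    [Nonempty A0] [Nonempty A1] [Nonempty B0] [Nonempty B1]
    (m : ℕ) (hm : 2 ≤ m)
    (JΘ : Matrix (A0 × Fin m × Fin m × A1 × B0 × Fin m × Fin m × B1)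
      (A0 × Fin m × Fin m × A1 × B0 × Fin m × Fin m × B1) ℂ)
    (hΘ₁ : JΘ.PosSemidef)
    (hΘ₂ : scTP JΘ = 1)
    (hΘ₃ : scTrAb0A1 JΘ = piFst (scTrA0Ab0A1 JΘ))
    (hΘ₄ : scTrA1 JΘ = piAb1 (scTrAb1A1 JΘ))
    (hΘ₅ : scTrBb0B1 JΘ = piB0sc (scTrB0Bb0B1 JΘ))
    (hΘ₆ : scTrB1 JΘ = piBb1sc (scTrBb1B1 JΘ)) :
    Lam (linkOut JΘ (upsChoi m)) ≤ m := by
  have hmem : (m : ℝ) ∈ {l : ℝ | ∃ Y : Matrix (A0 × A1 × B0 × B1) (A0 × A1 × B0 × B1) ℂ,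
      LoewnerLE (linkOut JΘ (upsChoi m)) Y ∧
        trA1B1 Y = l • (1 : Matrix (A0 × B0) (A0 × B0) ℂ) ∧ NS Y} := by
    refine ⟨feasY m JΘ, feas_psd m hm JΘ hΘ₁, feas_tr m hm JΘ hΘ₂ hΘ₄, ?_, ?_⟩
    · apply feas_NSA _ (fun u v => (m : ℂ)⁻¹ * ∑ b, ∑ b', ∑ a', ((Fintype.card A0 : ℂ))⁻¹ *
        scTrA0Ab0A1 JΘ (a', u.1, b, b', u.2) (a', v.1, b, b', v.2))
      intro x y
      rw [feas_trA1 m hm JΘ hΘ₄, hΘ₃]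
      simp only [piFst]
      split_ifs <;> simp
    · apply feas_NSB _ (fun u v => (m : ℂ)⁻¹ * ∑ a, ∑ a', ∑ b', ((Fintype.card B0 : ℂ))⁻¹ *
        scTrB0Bb0B1 JΘ (u.1, a, a', u.2, b') (v.1, a, a', v.2, b'))
      intro x y
      rw [feas_trB1 m hm JΘ hΘ₆, hΘ₅]
      simp only [piB0sc]
      split_ifs <;> simp
  unfold Lam
  by_cases hb : BddBelow {l : ℝ | ∃ Y : Matrix (A0 × A1 × B0 × B1) (A0 × A1 × B0 × B1) ℂ,
      LoewnerLE (linkOut JΘ (upsChoi m)) Y ∧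
        trA1B1 Y = l • (1 : Matrix (A0 × B0) (A0 × B0) ℂ) ∧ NS Y}
  · exact csInf_le hb hmem
  · rw [Real.sInf_of_not_bddBelow hb]
    positivity
end
end
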